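/- Every star decomposable pure simplicial complex is vertex decomposable. -/

import Mathlib

/-! Common definitions: finite abstract simplicial complexes, links, stars,
barycentric subdivision, joins, collapsibility, shellability, vertex
decomposability, star decomposability (also "in vertices"), and simplicial
homology (reduced, over ℤ and ℤ₂). -/

namespace Paper

open Finset

variable {V : Type*} [DecidableEq V]

/-- `K` is a (finite, abstract) simplicial complex: downward closed family of finsets. -/
def IsCplx (K : Finset (Finset V)) : Prop :=
  ∀ σ ∈ K, ∀ τ ⊆ σ, τ ∈ K

/-- Vertex set of a complex. -/
def verts (K : Finset (Finset V)) : Finset V := K.sup id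

/-- Dimension of a complex (as an integer; `-1` for `∅` and `{∅}`). -/
def dim (K : Finset (Finset V)) : ℤ := ((K.sup Finset.card : ℕ) : ℤ) - 1

/-- The facets (inclusion-maximal faces) of `K`. -/
def facets (K : Finset (Finset V)) : Finset (Finset V) :=
  K.filter fun σ => ∀ τ ∈ K, σ ⊆ τ → σ = τ

/-- `K` is pure `d`-dimensional: it is nonempty, every face has dimension at most `d`
and every face is contained in a face of dimension exactly `d`. -/
def PureDim (K : Finset (Finset V)) (d : ℤ) : Prop :=
  K.Nonempty ∧ (∀ σ ∈ K, (σ.card : ℤ) ≤ d + 1) ∧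
    ∀ σ ∈ K, ∃ τ ∈ K, σ ⊆ τ ∧ (τ.card : ℤ) = d + 1

/-- Link of a face. -/
def lk (σ : Finset V) (K : Finset (Finset V)) : Finset (Finset V) :=
  (K.filter fun τ => σ ⊆ τ).image fun τ => τ \ σ

/-- Closed star of a face. -/
def star (σ : Finset V) (K : Finset (Finset V)) : Finset (Finset V) :=
  K.filter fun τ => τ ∪ σ ∈ K

/-- Union of the closed stars of a set of vertices. -/
def starSet (S : Finset V) (K : Finset (Finset V)) : Finset (Finset V) :=
  K.filter fun τ => ∃ v ∈ S, τ ∪ {v} ∈ K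

/-- Subcomplex induced on a vertex set `S`. -/
def induced (S : Finset V) (K : Finset (Finset V)) : Finset (Finset V) :=
  K.filter fun σ => σ ⊆ S

/-- Deletion of a vertex:  `K - v`. -/
def deleteV (v : V) (K : Finset (Finset V)) : Finset (Finset V) :=
  K.filter fun σ => v ∉ σ

/-- The full simplex on vertex set `σ`. -/
def simplexCplx (σ : Finset V) : Finset (Finset V) := σ.powerset

/-- The boundary `∂σ` of the simplex on `σ`: all proper subsets of `σ`. -/
def bdSimplex (σ : Finset V) : Finset (Finset V) := σ.powerset.erase σ

/-- Barycentric subdivision: vertices are the nonempty faces of `K`, faces are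
chains of nonempty faces of `K`. -/
def sd (K : Finset (Finset V)) : Finset (Finset (Finset V)) :=
  if K = ∅ then ∅ else
    K.powerset.filter fun c => (∅ ∉ c) ∧ ∀ σ ∈ c, ∀ τ ∈ c, σ ⊆ τ ∨ τ ⊆ σ

/-- Join of two simplicial complexes (on the disjoint union of vertex types). -/
def join {α β : Type*} [DecidableEq α] [DecidableEq β]
    (X : Finset (Finset α)) (Y : Finset (Finset β)) : Finset (Finset (α ⊕ β)) :=
  (X ×ˢ Y).image fun p => p.1.image Sum.inl ∪ p.2.image Sum.inr

/-- `K'` arises from `K` by an elementary collapse: remove a free face `σ`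
together with the unique face `τ` properly containing it. -/
def ElemCollapse (K K' : Finset (Finset V)) : Prop :=
  ∃ σ ∈ K, ∃ τ ∈ K, σ ⊂ τ ∧ (∀ ρ ∈ K, σ ⊂ ρ → ρ = τ) ∧ K' = (K.erase σ).erase τ

/-- `K` collapses to `K'`. -/
def CollapsesTo (K K' : Finset (Finset V)) : Prop :=
  Relation.ReflTransGen ElemCollapse K K'

/-- `K` is collapsible: it collapses to a single vertex. -/
def Collapsible (K : Finset (Finset V)) : Prop :=
  ∃ w : V, CollapsesTo K ({∅, {w}} : Finset (Finset V))

/-- The removal-collapsibility condition: `K` is empty, or becomes collapsible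
after removal of a set of facets. -/
def RC (K : Finset (Finset V)) : Prop :=
  K = ∅ ∨ ∃ F ⊆ facets K, Collapsible (K \ F)

/-- The hereditary removal-collapsibility condition: the link of every face
(including the empty face, whose link is `K` itself) satisfies (RC). -/
def HRC (K : Finset (Finset V)) : Prop :=
  ∀ σ ∈ K, RC (lk σ K)

/-- `K` is shellable: there is a total order of its facets such that each facet
meets the union of the previous ones in a pure complex of codimension one. -/
def Shellable (K : Finset (Finset V)) : Prop :=
  ∃ L : List (Finset V), L.Nodup ∧ L.toFinset = facets K ∧
    ∀ i : ℕ, (hi : i < L.length) → 1 ≤ i →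
      PureDim ((L.get ⟨i, hi⟩).powerset ∩ ((L.take i).map Finset.powerset).foldr (· ∪ ·) ∅)
        (((L.get ⟨i, hi⟩).card : ℤ) - 2)

/-- Vertex decomposability (Provan–Billera) of a pure complex. -/
inductive VD : Finset (Finset V) → Prop
  | simplex (σ : Finset V) : VD σ.powerset
  | shed (K : Finset (Finset V)) (v : V) (hv : {v} ∈ K)
      (hdel : PureDim (deleteV v K) (dim K)) (hVDdel : VD (deleteV v K))
      (hlk : PureDim (lk {v} K) (dim K - 1)) (hVDlk : VD (lk {v} K)) : VD K

/-- `L` is a shedding order of `K` (a total order on `V(K)`, given as a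
duplicate-free list, witnessing vertex decomposability; once a simplex is
reached, an arbitrary order of its vertices qualifies). -/
inductive SheddingOrder : List V → Finset (Finset V) → Prop
  | simplex (σ : Finset V) (L : List V) (hnd : L.Nodup) (hfin : L.toFinset = σ) :
      SheddingOrder L σ.powerset
  | cons (v : V) (L : List V) (K : Finset (Finset V)) (hv : {v} ∈ K) (hvL : v ∉ L)
      (hcov : insert v L.toFinset = verts K)
      (hdel : PureDim (deleteV v K) (dim K))
      (hrest : SheddingOrder L (deleteV v K))
      (hlk : PureDim (lk {v} K) (dim K - 1)) (hVDlk : VD (lk {v} K)) :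
      SheddingOrder (v :: L) K

/-- `W` induces a star partition of `X`: the stars of the vertices of `W`
cover `X` and no two distinct vertices of `W` lie in a common face. -/
def StarPartition (W : Finset V) (X : Finset (Finset V)) : Prop :=
  (∀ σ ∈ X, ∃ w ∈ W, σ ∪ {w} ∈ X) ∧
    ∀ w₁ ∈ W, ∀ w₂ ∈ W, w₁ ≠ w₂ → ¬∃ σ ∈ X, w₁ ∈ σ ∧ w₂ ∈ σ

/-- The overlap `O_X(x, W') = lk(x,X) ∩ st(W',X)`. -/
def overlap (X : Finset (Finset V)) (x : V) (W' : Finset V) : Finset (Finset V) :=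
  lk {x} X ∩ starSet W' X

/-- Star decomposability of the pair `(X, X₀)`.  The total order on the set `W`
inducing the star partition is encoded as a duplicate-free list `L` (earlier in
the list = smaller in the order). -/
inductive StarDec : Finset (Finset V) → Finset V → Prop
  | base : StarDec ({∅} : Finset (Finset V)) (∅ : Finset V)
  | step (X : Finset (Finset V)) (X₀ : Finset V) (k : ℤ) (hk : 0 ≤ k) (hpure : PureDim X k)
      (L : List V) (hne : L ≠ []) (hnd : L.Nodup) (hsub : L.toFinset ⊆ verts X)
      (hsp : StarPartition L.toFinset X)
      (horder : ∃ i < L.length, X₀ = (L.drop i).toFinset)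
      (U : ℕ → Finset V)
      (hUne : ∀ i, i + 1 < L.length → (U i).Nonempty)
      (hUsub : ∀ i, (hi : i + 1 < L.length) →
        U i ⊆ verts (lk {L.get ⟨i, Nat.lt_of_succ_lt hi⟩} X))
      (hUst : ∀ i, (hi : i + 1 < L.length) →
        starSet (U i) (lk {L.get ⟨i, Nat.lt_of_succ_lt hi⟩} X) =
          overlap X (L.get ⟨i, Nat.lt_of_succ_lt hi⟩) ((L.drop (i + 1)).toFinset))
      (hlink : ∀ i, (hi : i + 1 < L.length) →
        StarDec (lk {L.get ⟨i, Nat.lt_of_succ_lt hi⟩} X) (U i))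
      (Ulast : Finset V)
      (hlast : StarDec (lk {L.getLast hne} X) Ulast) :
      StarDec X X₀

/-- The order encoded by the list `L` induces a star decomposition of `(X, X₀)`. -/
def InducesStarDecomp (L : List V) (X : Finset (Finset V)) (X₀ : Finset V) : Prop :=
  (L = [] ∧ X = ({∅} : Finset (Finset V)) ∧ X₀ = ∅) ∨
  ∃ hne : L ≠ [], L.Nodup ∧ StarPartition L.toFinset X ∧
    (∃ i < L.length, X₀ = (L.drop i).toFinset) ∧
    (∀ i, (hi : i + 1 < L.length) →
      ∃ U : Finset V, U.Nonempty ∧ U ⊆ verts (lk {L.get ⟨i, Nat.lt_of_succ_lt hi⟩} X) ∧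
        starSet U (lk {L.get ⟨i, Nat.lt_of_succ_lt hi⟩} X) =
          overlap X (L.get ⟨i, Nat.lt_of_succ_lt hi⟩) ((L.drop (i + 1)).toFinset) ∧
        StarDec (lk {L.get ⟨i, Nat.lt_of_succ_lt hi⟩} X) U) ∧
    (∃ U : Finset V, StarDec (lk {L.getLast hne} X) U)

/-- Star decomposability *in vertices* of the pair `(sd Y, Y₀)`; the data is the
underlying complex `Y` together with `Y₀ ⊆ V(Y)`.  The total order on `V(Y)` is
encoded as a duplicate-free list `L`. -/
inductive StarDecV : Finset (Finset V) → Finset V → Prop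
  | base : StarDecV ({∅} : Finset (Finset V)) (∅ : Finset V)
  | step (Y : Finset (Finset V)) (Y₀ : Finset V) (k : ℤ) (hk : 0 ≤ k) (hpure : PureDim Y k)
      (L : List V) (hne : L ≠ []) (hnd : L.Nodup) (hV : L.toFinset = verts Y)
      (horder : ∃ i < L.length, Y₀ = (L.drop i).toFinset)
      (hlink : ∀ i, (hi : i + 1 < L.length) →
        StarDecV (lk {L.get ⟨i, Nat.lt_of_succ_lt hi⟩} Y)
          (verts (lk {L.get ⟨i, Nat.lt_of_succ_lt hi⟩} Y) ∩ (L.drop (i + 1)).toFinset))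
      (hlast : StarDecV (lk {L.getLast hne} Y) (verts (lk {L.getLast hne} Y))) :
      StarDecV Y Y₀

/-- The order encoded by the list `L` induces a star decomposition of
`(sd Y, Y₀)` in vertices. -/
def InducesStarDecompV (L : List V) (Y : Finset (Finset V)) (Y₀ : Finset V) : Prop :=
  (L = [] ∧ Y = ({∅} : Finset (Finset V)) ∧ Y₀ = ∅) ∨
  ∃ hne : L ≠ [], L.Nodup ∧ L.toFinset = verts Y ∧
    (∃ i < L.length, Y₀ = (L.drop i).toFinset) ∧
    (∀ i, (hi : i + 1 < L.length) →
      StarDecV (lk {L.get ⟨i, Nat.lt_of_succ_lt hi⟩} Y)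
        (verts (lk {L.get ⟨i, Nat.lt_of_succ_lt hi⟩} Y) ∩ (L.drop (i + 1)).toFinset)) ∧
    StarDecV (lk {L.getLast hne} Y) (verts (lk {L.getLast hne} Y))

/-- Simplicial isomorphism between two complexes. -/
def SimpIso {α β : Type*} [DecidableEq α] [DecidableEq β]
    (K : Finset (Finset α)) (L : Finset (Finset β)) : Prop :=
  ∃ f : α → β, Set.InjOn f ↑(verts K) ∧ K.image (fun σ => σ.image f) = L

/-- Simplicial isomorphism of pairs (complex, subcomplex). -/
def SimpIsoPair {α β : Type*} [DecidableEq α] [DecidableEq β]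
    (K K₁ : Finset (Finset α)) (L L₁ : Finset (Finset β)) : Prop :=
  ∃ f : α → β, Set.InjOn f ↑(verts K) ∧ K.image (fun σ => σ.image f) = L ∧
    K₁.image (fun σ => σ.image f) = L₁

/-! Reduced simplicial homology (the empty face is included, so the chain
complex below, graded by cardinality of faces, computes *reduced* homology). -/

/-- Faces of `K` of cardinality `n`. -/
def kfaces (K : Finset (Finset V)) (n : ℕ) : Finset (Finset V) :=
  K.filter fun σ => σ.card = n

/-- The mod 2 boundary operator, from chains on faces of cardinality `n+1`
to chains on faces of cardinality `n`. -/
noncomputable def bdry2 (K : Finset (Finset V)) (n : ℕ) :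
    (↥(kfaces K (n + 1)) → ZMod 2) →ₗ[ZMod 2] (↥(kfaces K n) → ZMod 2) :=
  Matrix.mulVecLin (Matrix.of fun (τ : ↥(kfaces K n)) (σ : ↥(kfaces K (n + 1))) =>
    if (τ : Finset V) ⊆ (σ : Finset V) then (1 : ZMod 2) else 0)

/-- The reduced Betti number `β̃ᵢ(K; ℤ₂)`. -/
noncomputable def betti2 (K : Finset (Finset V)) (i : ℕ) : ℕ :=
  Module.finrank (ZMod 2) (LinearMap.ker (bdry2 K i)) -
    Module.finrank (ZMod 2) (LinearMap.range (bdry2 K (i + 1)))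

/-- Signed incidence coefficient (with respect to an arbitrary, but fixed,
linear order on the vertices; reduced homology does not depend on the choice). -/
noncomputable def coeffInt (σ τ : Finset V) : ℤ :=
  letI : LinearOrder V := IsWellOrder.linearOrder WellOrderingRel
  (σ \ τ).sum fun v => (-1 : ℤ) ^ ((σ.filter fun u => u < v).card)

/-- The integral boundary operator, from chains on faces of cardinality `n+1`
to chains on faces of cardinality `n`. -/
noncomputable def bdryZ (K : Finset (Finset V)) (n : ℕ) :
    (↥(kfaces K (n + 1)) → ℤ) →ₗ[ℤ] (↥(kfaces K n) → ℤ) :=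
  Matrix.mulVecLin (Matrix.of fun (τ : ↥(kfaces K n)) (σ : ↥(kfaces K (n + 1))) =>
    if (τ : Finset V) ⊆ (σ : Finset V) then coeffInt (σ : Finset V) (τ : Finset V) else 0)

/-- `K` has trivial reduced (integral) homology: `H̃ₙ(K; ℤ) = 0` for all
`n ≥ -1`. -/
def TrivialRedHomology (K : Finset (Finset V)) : Prop :=
  K.Nonempty ∧ LinearMap.range (bdryZ K 0) = ⊤ ∧
    ∀ n : ℕ, LinearMap.ker (bdryZ K n) = LinearMap.range (bdryZ K (n + 1))

/-- Reduced Euler characteristic. -/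
def redEuler (K : Finset (Finset V)) : ℤ :=
  (∑ σ ∈ K.filter fun σ => σ ≠ ∅, (-1 : ℤ) ^ (σ.card - 1)) - 1



/-! ### Proof -/

theorem mem_lk_single (v : V) (K : Finset (Finset V)) (τ : Finset V) :
    τ ∈ lk {v} K ↔ v ∉ τ ∧ insert v τ ∈ K := by
  unfold lk
  simp only [mem_image, mem_filter, singleton_subset_iff]
  constructor
  · rintro ⟨a, ⟨ha, hv⟩, rfl⟩
    refine ⟨by simp, ?_⟩
    rw [sdiff_singleton_eq_erase, insert_erase hv]
    exact ha
  · rintro ⟨h1, h2⟩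
    refine ⟨insert v τ, ⟨h2, by simp⟩, ?_⟩
    rw [sdiff_singleton_eq_erase, erase_insert h1]

theorem mem_deleteV (v : V) (K : Finset (Finset V)) (τ : Finset V) :
    τ ∈ deleteV v K ↔ τ ∈ K ∧ v ∉ τ := by
  simp [deleteV]

theorem mem_starSet (S : Finset V) (K : Finset (Finset V)) (τ : Finset V) :
    τ ∈ starSet S K ↔ τ ∈ K ∧ ∃ v ∈ S, insert v τ ∈ K := by
  simp [starSet, union_singleton]

theorem mem_verts (K : Finset (Finset V)) (v : V) : v ∈ verts K ↔ ∃ σ ∈ K, v ∈ σ := by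
  simp [verts, mem_sup]

/-- Cone with apex `w`. -/
def coneC (w : V) (K : Finset (Finset V)) : Finset (Finset V) := K ∪ K.image (insert w)

theorem mem_coneC {w : V} {K : Finset (Finset V)} (hw : ∀ σ ∈ K, w ∉ σ) (τ : Finset V) :
    τ ∈ coneC w K ↔ τ.erase w ∈ K := by
  simp only [coneC, mem_union, mem_image]
  constructor
  · rintro (h | ⟨a, h, rfl⟩)
    · rwa [erase_eq_of_notMem (hw _ h)]
    · rwa [erase_insert (hw _ h)]
  · intro h
    by_cases hwt : w ∈ τ
    · right
      exact ⟨_, h, insert_erase hwt⟩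
    · left
      rwa [erase_eq_of_notMem hwt] at h

theorem dim_eq_of_pure {K : Finset (Finset V)} {d : ℤ} (h : PureDim K d) : dim K = d := by
  obtain ⟨⟨σ, hσ⟩, h1, h2⟩ := h
  obtain ⟨τ, hτ, -, hc⟩ := h2 σ hσ
  have ha : K.sup Finset.card ≤ τ.card := by
    apply Finset.sup_le
    intro ρ hρ
    have := h1 ρ hρ
    omega
  have hb : τ.card ≤ K.sup Finset.card := Finset.le_sup (f := Finset.card) hτ
  unfold dim
  omega

theorem pure_coneC {w : V} {K : Finset (Finset V)} (hw : ∀ σ ∈ K, w ∉ σ) {d : ℤ}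
    (h : PureDim K d) : PureDim (coneC w K) (d + 1) := by
  obtain ⟨⟨σ, hσ⟩, h1, h2⟩ := h
  refine ⟨⟨σ, by simp [coneC, hσ]⟩, ?_, ?_⟩
  · intro τ hτ
    rw [mem_coneC hw] at hτ
    have := h1 _ hτ
    have h3 := Finset.pred_card_le_card_erase (s := τ) (a := w)
    omega
  · intro τ hτ
    rw [mem_coneC hw] at hτ
    obtain ⟨ρ, hρ, hs, hc⟩ := h2 _ hτ
    refine ⟨insert w ρ, ?_, ?_, ?_⟩
    · rw [mem_coneC hw, erase_insert (hw _ hρ)]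
      exact hρ
    · rwa [Finset.subset_insert_iff]
    · rw [card_insert_of_notMem (hw _ hρ)]
      push_cast
      omega

theorem pure_union {A B : Finset (Finset V)} {d : ℤ} (hA : ∀ σ ∈ A, (σ.card : ℤ) ≤ d + 1)
    (hA' : ∀ σ ∈ A, ∃ τ ∈ A, σ ⊆ τ ∧ (τ.card : ℤ) = d + 1)
    (hB : PureDim B d) : PureDim (A ∪ B) d := by
  obtain ⟨⟨σ, hσ⟩, h1, h2⟩ := hB
  refine ⟨⟨σ, by simp [hσ]⟩, ?_, ?_⟩
  · intro τ hτ
    rcases mem_union.1 hτ with h | h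
    · exact hA _ h
    · exact h1 _ h
  · intro τ hτ
    rcases mem_union.1 hτ with h | h
    · obtain ⟨ρ, hρ, h3⟩ := hA' _ h
      exact ⟨ρ, mem_union_left _ hρ, h3⟩
    · obtain ⟨ρ, hρ, h3⟩ := h2 _ h
      exact ⟨ρ, mem_union_right _ hρ, h3⟩

theorem deleteV_coneC {w v : V} (hvw : v ≠ w) {K : Finset (Finset V)} (hw : ∀ σ ∈ K, w ∉ σ) :
    deleteV v (coneC w K) = coneC w (deleteV v K) := by
  ext τ
  rw [mem_deleteV, mem_coneC hw, mem_coneC (fun σ hσ => hw σ ((mem_deleteV _ _ _).1 hσ).1),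
    mem_deleteV]
  simp [hvw]

theorem lk_coneC {w v : V} (hvw : v ≠ w) {K : Finset (Finset V)} (hw : ∀ σ ∈ K, w ∉ σ) :
    lk {v} (coneC w K) = coneC w (lk {v} K) := by
  ext τ
  rw [mem_lk_single, mem_coneC hw, mem_coneC (fun σ hσ => ?_), mem_lk_single,
    erase_insert_of_ne hvw]
  · simp [hvw]
  · have := hw _ ((mem_lk_single _ _ _).1 hσ).2
    intro h
    exact this (mem_insert_of_mem h)

theorem notMem_lk {w v : V} {K : Finset (Finset V)} (hw : ∀ σ ∈ K, w ∉ σ) :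
    ∀ σ ∈ lk {v} K, w ∉ σ := by
  intro σ hσ h
  exact hw _ ((mem_lk_single _ _ _).1 hσ).2 (mem_insert_of_mem h)

theorem VD_coneC {K : Finset (Finset V)} (h : VD K) (w : V) (hw : ∀ σ ∈ K, w ∉ σ) :
    VD (coneC w K) := by
  induction h with
  | simplex σ =>
    have : coneC w σ.powerset = (insert w σ).powerset := by
      rw [powerset_insert]; rfl
    rw [this]
    exact VD.simplex _
  | shed K v hv hdel hVDdel hlk hVDlk ih1 ih2 =>
    have hvw : v ≠ w := by
      rintro rfl
      exact hw _ hv (mem_singleton_self _)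
    have hwd : ∀ σ ∈ deleteV v K, w ∉ σ := fun σ hσ => hw σ ((mem_deleteV _ _ _).1 hσ).1
    have hwl := notMem_lk (v := v) hw
    have hd : dim (coneC w K) = dim K + 1 := by
      -- both are computed by cardinalities
      have hne : K.Nonempty := ⟨_, hv⟩
      obtain ⟨ρ, hρ, hc⟩ := Finset.exists_mem_eq_sup K hne Finset.card
      have h1 : (coneC w K).sup Finset.card ≤ K.sup Finset.card + 1 := by
        apply Finset.sup_le
        intro τ hτ
        rw [mem_coneC hw] at hτ
        have h3 := Finset.pred_card_le_card_erase (s := τ) (a := w)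
        have h4 : (τ.erase w).card ≤ K.sup Finset.card := Finset.le_sup (f := Finset.card) hτ
        omega
      have h2 : (insert w ρ).card ≤ (coneC w K).sup Finset.card := by
        apply Finset.le_sup (f := Finset.card)
        rw [mem_coneC hw, erase_insert (hw _ hρ)]
        exact hρ
      rw [card_insert_of_notMem (hw _ hρ)] at h2
      unfold dim
      omega
    refine VD.shed _ v ?_ ?_ ?_ ?_ ?_
    · simp [coneC, hv]
    · rw [deleteV_coneC hvw hw, hd]
      exact pure_coneC hwd hdel
    · rw [deleteV_coneC hvw hw]
      exact ih1 hwd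
    · rw [lk_coneC hvw hw, hd]
      have := pure_coneC hwl hlk
      convert this using 1
      ring
    · rw [lk_coneC hvw hw]
      exact ih2 hwl

/-- `K` sheds to `K'`, all complexes being pure of dimension `d`. -/
inductive Sh (d : ℤ) : Finset (Finset V) → Finset (Finset V) → Prop
  | refl (K : Finset (Finset V)) : Sh d K K
  | step (K K' : Finset (Finset V)) (v : V) (hv : {v} ∈ K)
      (hdel : PureDim (deleteV v K) d)
      (hlk : PureDim (lk {v} K) (d - 1)) (hVDlk : VD (lk {v} K))
      (hs : Sh d (deleteV v K) K') : Sh d K K'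

theorem Sh.trans {d : ℤ} {A B C : Finset (Finset V)} (h1 : Sh d A B) (h2 : Sh d B C) :
    Sh d A C := by
  induction h1 with
  | refl K => exact h2
  | step K K' v hv hdel hlk hVD hs ih => exact Sh.step K C v hv hdel hlk hVD (ih h2)

theorem Sh.subset {d : ℤ} {A B : Finset (Finset V)} (h1 : Sh d A B) : B ⊆ A := by
  induction h1 with
  | refl K => exact Subset.refl _
  | step K K' v hv hdel hlk hVD hs ih => exact ih.trans (filter_subset _ _)

theorem Sh.vd {d : ℤ} {A B : Finset (Finset V)} (h1 : Sh d A B) (hA : PureDim A d)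
    (hB : VD B) : VD A := by
  induction h1 with
  | refl K => exact hB
  | step K K' v hv hdel hlk hVD hs ih =>
    have hd := dim_eq_of_pure hA
    exact VD.shed K v hv (hd ▸ hdel) (ih hdel hB) (hd ▸ hlk) hVD

theorem glue {k : ℤ} {A Y O : Finset (Finset V)} (w : V) (hA : PureDim A k) (hAc : IsCplx A)
    (hwA : ∀ σ ∈ A, w ∉ σ) (hOA : O ⊆ A) (hO : PureDim O (k - 1)) (hOv : VD O)
    (hO0 : ∅ ∈ O)
    (h : Sh (k - 1) Y O) (hwY : ∀ σ ∈ Y, w ∉ σ) (hYA : Y ∩ A ⊆ O) :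
    Sh k (A ∪ coneC w Y) A := by
  induction h with
  | refl K =>
    have e1 : deleteV w (A ∪ coneC w K) = A := by
      ext τ
      rw [mem_deleteV, mem_union, mem_coneC hwY]
      constructor
      · rintro ⟨h | h, h2⟩
        · exact h
        · rw [erase_eq_of_notMem h2] at h
          exact hOA h
      · intro h
        exact ⟨Or.inl h, hwA _ h⟩
    have e2 : lk {w} (A ∪ coneC w K) = K := by
      ext τ
      rw [mem_lk_single, mem_union, mem_coneC hwY]
      constructor
      · rintro ⟨h2, h | h⟩
        · exact absurd (mem_insert_self _ _) (hwA _ h)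
        · rwa [erase_insert h2] at h
      · intro h
        refine ⟨hwY _ h, Or.inr ?_⟩
        rwa [erase_insert (hwY _ h)]
    refine Sh.step _ _ w ?_ (by rwa [e1]) (by rwa [e2]) (by rwa [e2]) ?_
    · rw [mem_union, mem_coneC hwY]
      right
      simpa using hO0
    · rw [e1]
      exact Sh.refl _
  | step K K' v hv hdel hlk hVD hs ih =>
    have hvw : v ≠ w := by
      rintro rfl
      exact hwY _ hv (mem_singleton_self _)
    have hvA : ∀ σ ∈ A, v ∉ σ := by
      intro σ hσ hvσ
      have h1 : {v} ∈ A := hAc σ hσ _ (singleton_subset_iff.2 hvσ)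
      have h2 := hs.subset (hYA (mem_inter.2 ⟨hv, h1⟩))
      exact ((mem_deleteV _ _ _).1 h2).2 (mem_singleton_self _)
    have hwd : ∀ σ ∈ deleteV v K, w ∉ σ := fun σ hσ => hwY σ ((mem_deleteV _ _ _).1 hσ).1
    have e1 : deleteV v (A ∪ coneC w K) = A ∪ coneC w (deleteV v K) := by
      rw [← deleteV_coneC hvw hwY]
      ext τ
      simp only [mem_deleteV, mem_union]
      have := hvA τ
      tauto
    have e2 : lk {v} (A ∪ coneC w K) = coneC w (lk {v} K) := by
      rw [← lk_coneC hvw hwY]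
      ext τ
      simp only [mem_lk_single, mem_union]
      have : insert v τ ∉ A := fun h => hvA _ h (mem_insert_self _ _)
      tauto
    refine Sh.step _ _ v ?_ ?_ ?_ ?_ ?_
    · simp [coneC, hv]
    · rw [e1]
      have := pure_coneC hwd hdel
      rw [sub_add_cancel] at this
      exact pure_union hA.2.1 hA.2.2 this
    · rw [e2]
      have := pure_coneC (notMem_lk (v := v) hwY) hlk
      rwa [sub_add_cancel] at this
    · rw [e2]
      exact VD_coneC hVD w (notMem_lk hwY)
    · rw [e1]
      refine ih hOA hO hOv hO0 hwd ?_
      exact (inter_subset_inter_right (filter_subset _ _)).trans hYA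

theorem isCplx_lk {X : Finset (Finset V)} (hX : IsCplx X) (w : V) : IsCplx (lk {w} X) := by
  intro σ hσ τ hτ
  rw [mem_lk_single] at *
  exact ⟨fun h => hσ.1 (hτ h), hX _ hσ.2 _ (insert_subset_insert _ hτ)⟩

theorem isCplx_starSet {X : Finset (Finset V)} (hX : IsCplx X) (S : Finset V) :
    IsCplx (starSet S X) := by
  intro σ hσ τ hτ
  rw [mem_starSet] at *
  obtain ⟨h1, v, hv, h2⟩ := hσ
  exact ⟨hX _ h1 _ hτ, v, hv, hX _ h2 _ (insert_subset_insert _ hτ)⟩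

theorem pure_lk {X : Finset (Finset V)} {k : ℤ} (hp : PureDim X k) {w : V}
    (hw : {w} ∈ X) : PureDim (lk {w} X) (k - 1) := by
  refine ⟨⟨∅, by rw [mem_lk_single]; simpa using hw⟩, ?_, ?_⟩
  · intro σ hσ
    rw [mem_lk_single] at hσ
    have := hp.2.1 _ hσ.2
    rw [card_insert_of_notMem hσ.1] at this
    push_cast at this
    omega
  · intro σ hσ
    rw [mem_lk_single] at hσ
    obtain ⟨τ, hτ, hs, hc⟩ := hp.2.2 _ hσ.2
    have hwτ : w ∈ τ := hs (mem_insert_self _ _)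
    refine ⟨τ.erase w, ?_, ?_, ?_⟩
    · rw [mem_lk_single, insert_erase hwτ]
      exact ⟨notMem_erase _ _, hτ⟩
    · intro x hx
      rw [mem_erase]
      refine ⟨?_, hs (mem_insert_of_mem hx)⟩
      rintro rfl
      exact hσ.1 hx
    · have := card_erase_add_one hwτ
      omega

theorem empty_mem_starSet {X : Finset (Finset V)} (hX : IsCplx X) {S : Finset V}
    (hS : S.Nonempty) (hSX : S ⊆ verts X) : ∅ ∈ starSet S X := by
  obtain ⟨s, hs⟩ := hS
  obtain ⟨σ, hσ, h⟩ := (mem_verts _ _).1 (hSX hs)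
  rw [mem_starSet]
  refine ⟨hX _ hσ _ (empty_subset _), s, hs, hX _ hσ _ ?_⟩
  simpa using h

theorem pure_starSet {X : Finset (Finset V)} (hX : IsCplx X) {k : ℤ} (hp : PureDim X k)
    {S : Finset V} (hS : S.Nonempty) (hSX : S ⊆ verts X) : PureDim (starSet S X) k := by
  refine ⟨⟨∅, empty_mem_starSet hX hS hSX⟩, ?_, ?_⟩
  · intro σ hσ
    exact hp.2.1 _ ((mem_starSet _ _ _).1 hσ).1
  · intro σ hσ
    obtain ⟨h1, s, hs, h2⟩ := (mem_starSet _ _ _).1 hσ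
    obtain ⟨τ, hτ, hst, hc⟩ := hp.2.2 _ h2
    refine ⟨τ, ?_, (subset_insert _ _).trans hst, hc⟩
    rw [mem_starSet]
    refine ⟨hτ, s, hs, ?_⟩
    rwa [insert_eq_of_mem (hst (mem_insert_self _ _))]

theorem starSet_insert {X : Finset (Finset V)} (hX : IsCplx X) (w : V) (S : Finset V) :
    starSet (insert w S) X = starSet S X ∪ coneC w (lk {w} X) := by
  ext τ
  have hw : ∀ σ ∈ lk {w} X, w ∉ σ := fun σ hσ => ((mem_lk_single _ _ _).1 hσ).1
  have e : insert w (τ.erase w) = insert w τ := by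
    ext x; by_cases h : x = w <;> simp [h]
  rw [mem_union, mem_starSet, mem_starSet, mem_coneC hw, mem_lk_single, e]
  have h1 : insert w τ ∈ X → τ ∈ X := fun h => hX _ h _ (subset_insert _ _)
  simp only [mem_insert, exists_eq_or_imp, notMem_erase, not_false_eq_true, true_and]
  by_cases h2 : insert w τ ∈ X
  · simp [h2, h1 h2]
  · simp [h2]

theorem main_aux (X : Finset (Finset V)) (X₀ : Finset V) (h : StarDec X X₀) :
    IsCplx X → VD X ∧ ∀ d, PureDim X d → X₀.Nonempty →
      Sh d X (starSet X₀ X) ∧ VD (starSet X₀ X) := by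
  induction h with
  | base =>
    intro _
    refine ⟨?_, ?_⟩
    · have := VD.simplex (∅ : Finset V)
      simpa using this
    · intro d _ h
      exact absurd h (by simp)
  | step X X₀ k hk hp L hne hnd hsub hsp horder U hUne hUsub hUst hlink Ulast hlast ih1 ih2 =>
    intro hX
    have hwX : ∀ w ∈ L, {w} ∈ X := by
      intro w hw
      obtain ⟨σ, hσ, h⟩ := (mem_verts _ _).1 (hsub (List.mem_toFinset.2 hw))
      exact hX _ hσ _ (by simpa using h)
    have hdsub : ∀ i, (L.drop i).toFinset ⊆ verts X := by
      intro i v hv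
      exact hsub (List.mem_toFinset.2 (List.mem_of_mem_drop (List.mem_toFinset.1 hv)))
    have hdne : ∀ i, i < L.length → (L.drop i).toFinset.Nonempty := by
      intro i hi
      refine ⟨L[i], ?_⟩
      rw [List.mem_toFinset, List.drop_eq_getElem_cons hi]
      exact List.mem_cons_self
    have hdpure : ∀ i, i < L.length → PureDim (starSet (L.drop i).toFinset X) k :=
      fun i hi => pure_starSet hX hp (hdne i hi) (hdsub i)
    have hlkw : ∀ w, ∀ σ ∈ lk {w} X, w ∉ σ := fun w σ hσ => ((mem_lk_single _ _ _).1 hσ).1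
    have hstep : ∀ i, i + 1 < L.length →
        Sh k (starSet (L.drop i).toFinset X) (starSet (L.drop (i + 1)).toFinset X) := by
      intro i hi
      have hi' : i < L.length := Nat.lt_of_succ_lt hi
      have hst := hUst i hi
      have hus := hUsub i hi
      have ih := ih1 i hi
      rw [List.get_eq_getElem] at hst hus ih
      simp only at hst hus ih
      have hwL : L[i] ∈ L := List.getElem_mem hi'
      have hnot : L[i] ∉ L.drop (i + 1) := by
        have h := hnd.sublist (List.drop_sublist i L)
        rw [List.drop_eq_getElem_cons hi'] at h
        exact (List.nodup_cons.1 h).1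
      have hcons : (L.drop i).toFinset = insert L[i] (L.drop (i + 1)).toFinset := by
        rw [List.drop_eq_getElem_cons hi', List.toFinset_cons]
      generalize L[i] = w at *
      have hY := isCplx_lk hX w
      have hYp := pure_lk hp (hwX w hwL)
      have hr := (ih hY).2 _ hYp (hUne i hi)
      have hOp := pure_starSet hY hYp (hUne i hi) hus
      have hO0 := empty_mem_starSet hY (hUne i hi) hus
      rw [hst] at hr hOp hO0
      rw [hcons, starSet_insert hX]
      refine glue w (hdpure _ hi) (isCplx_starSet hX _) ?_ ?_ hOp hr.2 hO0 hr.1 (hlkw w) ?_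
      · intro σ hσ hwσ
        obtain ⟨h1, s, hs, h2⟩ := (mem_starSet _ _ _).1 hσ
        rw [List.mem_toFinset] at hs
        refine hsp.2 w (List.mem_toFinset.2 hwL) s
          (List.mem_toFinset.2 (List.mem_of_mem_drop hs)) ?_ ⟨_, h2, ?_, ?_⟩
        · rintro rfl
          exact hnot hs
        · exact mem_insert_of_mem hwσ
        · exact mem_insert_self _ _
      · exact inter_subset_right
      · exact Subset.refl _
    have hlastVD : VD (starSet (L.drop (L.length - 1)).toFinset X) := by
      have e : L.drop (L.length - 1) = [L.getLast hne] := List.drop_length_sub_one hne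
      rw [e]
      have e2 : [L.getLast hne].toFinset = insert (L.getLast hne) ∅ := by simp
      rw [e2, starSet_insert hX]
      have e3 : starSet ∅ X = ∅ := by simp [starSet]
      rw [e3, empty_union]
      exact VD_coneC (ih2 (isCplx_lk hX _)).1 _ (hlkw _)
    have hsh : ∀ n i, i + n < L.length →
        Sh k (starSet (L.drop i).toFinset X) (starSet (L.drop (i + n)).toFinset X) := by
      intro n
      induction n with
      | zero => intro i _; exact Sh.refl _
      | succ n ihn =>
        intro i hi
        exact (ihn i (by omega)).trans (hstep (i + n) hi)
    have hlen : 0 < L.length := List.length_pos_iff.2 hne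
    have hvd : ∀ i, i < L.length → VD (starSet (L.drop i).toFinset X) := by
      intro i hi
      have h := hsh (L.length - 1 - i) i (by omega)
      have e : i + (L.length - 1 - i) = L.length - 1 := by omega
      rw [e] at h
      exact h.vd (hdpure i hi) hlastVD
    have h0 : starSet (L.drop 0).toFinset X = X := by
      ext τ
      rw [mem_starSet, List.drop_zero]
      constructor
      · exact fun h => h.1
      · intro h
        obtain ⟨w, hw, h2⟩ := hsp.1 τ h
        exact ⟨h, w, hw, by rwa [union_singleton] at h2⟩
    refine ⟨h0 ▸ hvd 0 hlen, ?_⟩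
    intro d hd _
    have hdk : d = k := (dim_eq_of_pure hd).symm.trans (dim_eq_of_pure hp)
    subst hdk
    obtain ⟨i, hi, rfl⟩ := horder
    have h := hsh i 0 (by omega)
    rw [h0, Nat.zero_add] at h
    exact ⟨h, hvd i hi⟩

/-- Every star decomposable (pure) simplicial complex is vertex
decomposable. -/
theorem starDec_implies_VD {V : Type*} [DecidableEq V] (X : Finset (Finset V))
    (hX : IsCplx X) (X₀ : Finset V) (h : StarDec X X₀) : VD X := by
  exact (main_aux X X₀ h hX).1

end Paper
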